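/- (Uniform transference under anisotropic dilations.) Let m ∈ C_b(ℝ^{2d}) be a bilinear multiplier from L^{p₁}(ℝ^d)×L^{p₂}(ℝ^d) to L^p(ℝ^d). For ε = (ε₁,…,ε_d) ∈ (0,∞)^d set m_ε(n,k) := m(ε₁n₁,…,ε_d n_d, ε₁k₁,…,ε_d k_d) for n,k ∈ ℤ^d. Then each m_ε is a bilinear multiplier from L^{p₁}(𝕋^d)×L^{p₂}(𝕋^d) to L^p(𝕋^d) and sup_{ε∈(0,∞)^d} ‖m_ε‖_{BM(𝕋^d)} ≤ 𝔠·‖m‖_{BM(ℝ^d)}. -/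

import Mathlib

/-!
The proof is a Gaussian version of de Leeuw's transference argument, carried out with the exact
dilated frequencies `εn`, `εk`, which is why the bound does not depend on `ε`.

Given trigonometric polynomials `P`, `Q` with frequencies in `εℤ^d`, the operator on `ℝ^d` is tested
on `P(x) e^{-πt²|x|²/p₁}` and `Q(x) e^{-πt²|x|²/p₂}` (`bump`), whose Fourier transforms are finite
sums of narrow Gaussians around the frequencies (`rft_bump`). Since `m` is continuous and bounded,
after the substitution `x = y/t` the output is asymptotic, pointwise in `y` as `t → 0`, to
`T(P,Q)(y/t) e^{-π|y|²/p}`, where `T` has the symbol `m(εn, εk)` (`rBm_bump`, `tendsto_locAvg`); the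
relation `1/p₁ + 1/p₂ = 1/p` makes the Gaussian weights match and cancels the powers of `t` in the
three norms. Each quantity `∫ |S(y/t)|^q e^{-π|y|²} dy` with `S` a trigonometric polynomial tends to
the mean of `|S|^q` over a period (`tendsto_average`), i.e. to the `q`-th power of a norm on the
torus. The output is compared with its asymptotic form by dominated convergence after truncation at
a Gaussian majorant, which only decreases the left-hand side. This gives `transference` with constant
`1` for every `p > 0`, quasi-Banach range included.

It remains that `1 ≤ 𝔠` (`one_le_cc`). For `p < 1` this needs `B_{p₁}, B_{p₂} ≥ 1` and `0 < A_p ≤ 1`.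
The inequalities with `1` follow by testing one Rademacher function, but since `A` and `B` are
a supremum and an infimum of reals, one also needs Khintchine's inequality itself: exponential
moments of Rademacher sums are products of hyperbolic cosines, which yields the upper bound, and
comparison of the second moment with the `q`-th and fourth moments yields the lower bound.
-/

open MeasureTheory Filter Topology
open scoped ENNReal
noncomputable section

/-- The character `e^{2πi ξ·x}` on `ℝ^ι`. -/
noncomputable def rch {ι : Type} [Fintype ι] (ξ x : ι → ℝ) : ℂ :=
  Complex.exp (2 * Real.pi * Complex.I * ((∑ i, ξ i * x i : ℝ) : ℂ))

/-- The Fourier transform on `ℝ^ι`. -/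
noncomputable def rft {ι : Type} [Fintype ι] (f : (ι → ℝ) → ℂ) (ξ : ι → ℝ) : ℂ :=
  ∫ x : ι → ℝ, (starRingEnd ℂ) (rch ξ x) * f x

/-- The bilinear multiplier operator on `ℝ^ι`. -/
noncomputable def rBm {ι : Type} [Fintype ι] (m : (ι → ℝ) → (ι → ℝ) → ℂ)
    (f g : (ι → ℝ) → ℂ) (x : ι → ℝ) : ℂ :=
  ∫ ξ : ι → ℝ, ∫ η : ι → ℝ, rft f ξ * rft g η * m ξ η * rch (ξ + η) x

/-- `f ∈ SL¹(ℝ^ι)`. -/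
def rSL1 {ι : Type} [Fintype ι] (f : (ι → ℝ) → ℂ) : Prop :=
  Integrable f ∧ Integrable (rft f)

/-- The `(L^{p₁}, L^{p₂}, L^p)` bilinear multiplier norm on `ℝ^ι`. -/
noncomputable def rBMnorm (ι : Type) [Fintype ι] (p₁ p₂ p : ℝ)
    (m : (ι → ℝ) → (ι → ℝ) → ℂ) : ℝ≥0∞ :=
  sInf {C | ∀ f g : (ι → ℝ) → ℂ, rSL1 f → rSL1 g →
    eLpNorm (rBm m f g) (ENNReal.ofReal p) volume ≤
      C * eLpNorm f (ENNReal.ofReal p₁) volume * eLpNorm g (ENNReal.ofReal p₂) volume}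

/-- The normalized Haar measure on the torus `𝕋^d`, realized as Lebesgue measure on `[0,1)^d`. -/
noncomputable def torusMeasure (d : ℕ) : MeasureTheory.Measure (Fin d → ℝ) :=
  volume.restrict (Set.univ.pi fun _ : Fin d => Set.Ico (0:ℝ) 1)

/-- The `(L^{p₁}, L^{p₂}, L^p)` bilinear multiplier norm on the torus `𝕋^d`, where the
multiplier acts on Fourier coefficients of trigonometric polynomials, which are given by
finitely supported families of coefficients. -/
noncomputable def tBMnorm (d : ℕ) (p₁ p₂ p : ℝ)
    (m : (Fin d → ℤ) → (Fin d → ℤ) → ℂ) : ℝ≥0∞ :=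
  sInf {C | ∀ a b : ((Fin d → ℤ) →₀ ℂ),
    eLpNorm
        (fun x : Fin d → ℝ => ∑ n ∈ a.support, ∑ k ∈ b.support,
          a n * b k * m n k * rch (fun i => ((n i + k i : ℤ) : ℝ)) x)
        (ENNReal.ofReal p) (torusMeasure d) ≤
      C * eLpNorm (fun x : Fin d → ℝ => ∑ n ∈ a.support, a n * rch (fun i => ((n i : ℤ) : ℝ)) x)
            (ENNReal.ofReal p₁) (torusMeasure d)
        * eLpNorm (fun x : Fin d → ℝ => ∑ k ∈ b.support, b k * rch (fun i => ((k i : ℤ) : ℝ)) x)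
            (ENNReal.ofReal p₂) (torusMeasure d)}
/-- The Rademacher system on `[0,1]`. -/
noncomputable def rademacher (j : ℕ) (t : ℝ) : ℝ := (-1 : ℝ) ^ (⌊t * 2 ^ (j + 1)⌋ : ℤ)

/-- The best constant `A_q` in Khintchine's inequality
`A_q (∑ |α_j|²)^{1/2} ≤ ‖∑ α_j r_j‖_{L^q[0,1]}`. -/
noncomputable def khintchineA (q : ℝ) : ℝ :=
  sSup {A : ℝ | 0 ≤ A ∧ ∀ (N : ℕ) (α : Fin N → ℝ),
    A * (∑ j, α j ^ 2) ^ (1/2 : ℝ) ≤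
      (∫ t in (0:ℝ)..1, |∑ j, α j * rademacher j t| ^ q) ^ (1/q)}

/-- The best constant `B_q` in Khintchine's inequality
`‖∑ α_j r_j‖_{L^q[0,1]} ≤ B_q (∑ |α_j|²)^{1/2}`. -/
noncomputable def khintchineB (q : ℝ) : ℝ :=
  sInf {B : ℝ | 0 ≤ B ∧ ∀ (N : ℕ) (α : Fin N → ℝ),
    (∫ t in (0:ℝ)..1, |∑ j, α j * rademacher j t| ^ q) ^ (1/q) ≤
      B * (∑ j, α j ^ 2) ^ (1/2 : ℝ)}

/-- The constant `𝔠 = B_{p₁}B_{p₂}/A_p²` if `p < 1`, and `𝔠 = 1` otherwise. -/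
noncomputable def cc (p p₁ p₂ : ℝ) : ℝ :=
  if p < 1 then khintchineB p₁ * khintchineB p₂ / (khintchineA p) ^ 2 else 1

/-! ### The Khintchine constants -/

lemma rad_zero_left {t : ℝ} (h0 : 0 ≤ t) (h1 : t < 1 / 2) : rademacher 0 t = 1 := by
  have : ⌊t * 2 ^ (0 + 1)⌋ = 0 := by
    rw [Int.floor_eq_iff]; constructor <;> norm_num <;> linarith
  simp only [rademacher, this]; simp

lemma rad_zero_right {t : ℝ} (h0 : 1 / 2 ≤ t) (h1 : t < 1) : rademacher 0 t = -1 := by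
  have : ⌊t * 2 ^ (0 + 1)⌋ = 1 := by
    rw [Int.floor_eq_iff]; constructor <;> norm_num <;> linarith
  simp only [rademacher, this]; simp

lemma rad_succ (j : ℕ) (t : ℝ) : rademacher (j + 1) t = rademacher j (2 * t) := by
  unfold rademacher; congr 2; ring

lemma rad_sub_one (j : ℕ) (t : ℝ) : rademacher j (t - 1) = rademacher j t := by
  unfold rademacher
  have : (t - 1) * 2 ^ (j + 1) = t * 2 ^ (j + 1) - ((2 ^ (j + 1) : ℤ) : ℝ) := by push_cast; ring
  rw [this, Int.floor_sub_intCast, zpow_sub₀ (by norm_num)]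
  have h : Even ((2 : ℤ) ^ (j + 1)) := by rw [pow_succ]; exact even_two.mul_left _
  rw [h.neg_one_zpow, div_one]

lemma rad_abs (j : ℕ) (t : ℝ) : |rademacher j t| = 1 := by
  unfold rademacher; rw [abs_zpow]; simp

lemma rad_measurable (j : ℕ) : Measurable (rademacher j) := by
  unfold rademacher
  have h : Measurable fun n : ℤ => (-1 : ℝ) ^ n := measurable_from_top
  exact h.comp (Int.measurable_floor.comp (measurable_id.mul_const _))

/-- The Rademacher sum `∑ α_j r_j`. -/
def radSum {N : ℕ} (α : Fin N → ℝ) (t : ℝ) : ℝ := ∑ j, α j * rademacher j t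

lemma radSum_measurable {N : ℕ} (α : Fin N → ℝ) : Measurable (radSum α) := by
  unfold radSum
  exact Finset.measurable_sum _ fun j _ => (rad_measurable j).const_mul _

lemma radSum_abs_le {N : ℕ} (α : Fin N → ℝ) (t : ℝ) : |radSum α t| ≤ ∑ j, |α j| := by
  refine (Finset.abs_sum_le_sum_abs _ _).trans (le_of_eq ?_)
  simp [abs_mul, rad_abs]

lemma radSum_integrable {N : ℕ} (α : Fin N → ℝ) {F : ℝ → ℝ} (hF : Continuous F) (a b : ℝ) :
    IntervalIntegrable (fun t => F (radSum α t)) volume a b := by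
  obtain ⟨M, hM⟩ := (isCompact_Icc (a := -∑ j, |α j|) (b := ∑ j, |α j|)).exists_bound_of_continuousOn
    hF.continuousOn
  refine (intervalIntegrable_const (c := M)).mono_fun
    (hF.measurable.comp (radSum_measurable α)).aestronglyMeasurable ?_
  filter_upwards with t
  exact (hM _ (abs_le.1 (radSum_abs_le α t))).trans (le_abs_self M)

lemma radSum_sub_one {N : ℕ} (α : Fin N → ℝ) (t : ℝ) : radSum α (t - 1) = radSum α t := by
  simp [radSum, rad_sub_one]

lemma radSum_succ {N : ℕ} (α : Fin (N + 1) → ℝ) (t : ℝ) :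
    radSum α t = α 0 * rademacher 0 t + radSum (fun j : Fin N => α j.succ) (2 * t) := by
  simp [radSum, Fin.sum_univ_succ, rad_succ]

/-- Conditioning on the first sign: `r_0` equals `1` on the first half of `[0,1]` and `-1` on the
second, and on each half the remaining functions reproduce the whole Rademacher system. -/
lemma radSum_integral_succ {N : ℕ} (α : Fin (N + 1) → ℝ) {F : ℝ → ℝ} (hF : Continuous F) :
    ∫ t in (0:ℝ)..1, F (radSum α t) =
      (∫ t in (0:ℝ)..1, F (α 0 + radSum (fun j : Fin N => α j.succ) t)) / 2 +
      (∫ t in (0:ℝ)..1, F (-α 0 + radSum (fun j : Fin N => α j.succ) t)) / 2 := by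
  have hne : ∀ c : ℝ, ∀ᵐ t : ℝ, t ≠ c := fun c => by simp [ae_iff]
  rw [← intervalIntegral.integral_add_adjacent_intervals (b := 1 / 2)
    (radSum_integrable α hF _ _) (radSum_integrable α hF _ _)]
  congr 1
  · have e : ∫ t in (0:ℝ)..(1 / 2), F (radSum α t) =
        ∫ t in (0:ℝ)..(1 / 2), F (α 0 + radSum (fun j : Fin N => α j.succ) (2 * t)) := by
      refine intervalIntegral.integral_congr_ae ?_
      filter_upwards [hne (1 / 2)] with t ht hm
      rw [Set.uIoc_of_le (by norm_num)] at hm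
      rw [radSum_succ, rad_zero_left hm.1.le (lt_of_le_of_ne hm.2 ht), mul_one]
    rw [e, intervalIntegral.integral_comp_mul_left
      (fun s => F (α 0 + radSum (fun j : Fin N => α j.succ) s)) (by norm_num)]
    norm_num; ring
  · have e : ∫ t in (1 / 2 : ℝ)..1, F (radSum α t) =
        ∫ t in (1 / 2 : ℝ)..1, F (-α 0 + radSum (fun j : Fin N => α j.succ) (2 * t - 1)) := by
      refine intervalIntegral.integral_congr_ae ?_
      filter_upwards [hne 1] with t ht hm
      rw [Set.uIoc_of_le (by norm_num)] at hm
      rw [radSum_succ, rad_zero_right hm.1.le (lt_of_le_of_ne hm.2 ht), radSum_sub_one, mul_neg_one]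
    rw [e, intervalIntegral.integral_comp_mul_sub
      (fun s => F (-α 0 + radSum (fun j : Fin N => α j.succ) s)) (by norm_num)]
    norm_num; ring

/-- The exponential moments of a Rademacher sum; the shift `c` makes the induction go through. -/
lemma radSum_exp {N : ℕ} (α : Fin N → ℝ) (c : ℝ) :
    ∫ t in (0:ℝ)..1, Real.exp (c + radSum α t) = Real.exp c * ∏ j, Real.cosh (α j) := by
  induction N generalizing c with
  | zero => simp [radSum]
  | succ N ih =>
    rw [radSum_integral_succ α (F := fun x => Real.exp (c + x)) (by fun_prop)]
    simp only [← add_assoc]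
    rw [ih, ih, Fin.prod_univ_succ, Real.cosh_eq, Real.exp_add, Real.exp_add]
    ring

lemma radSum_sq {N : ℕ} (α : Fin N → ℝ) (c : ℝ) :
    ∫ t in (0:ℝ)..1, (c + radSum α t) ^ 2 = c ^ 2 + ∑ j, α j ^ 2 := by
  induction N generalizing c with
  | zero => simp [radSum]
  | succ N ih =>
    rw [radSum_integral_succ α (F := fun x => (c + x) ^ 2) (by fun_prop)]
    simp only [← add_assoc]
    rw [ih, ih, Fin.sum_univ_succ]
    ring

/-- The constant in the moment bound `E|S|^q ≤ momC q` for normalized Rademacher sums. -/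
def momC (q : ℝ) : ℝ := (1 + (⌈q⌉₊.factorial : ℝ)) * (2 * Real.exp (1 / 2))

lemma momC_ge {q : ℝ} : 1 ≤ momC q := by
  have h : (1:ℝ) ≤ ⌈q⌉₊.factorial := by exact_mod_cast Nat.succ_le_of_lt (Nat.factorial_pos _)
  have := Real.one_le_exp (x := 1/2) (by norm_num)
  unfold momC; nlinarith

lemma abs_rpow_le_exp {q : ℝ} (hq : 0 < q) (x : ℝ) :
    |x| ^ q ≤ (1 + (⌈q⌉₊.factorial : ℝ)) * (Real.exp x + Real.exp (-x)) := by
  have hE : Real.exp |x| ≤ Real.exp x + Real.exp (-x) := by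
    rcases abs_cases x with ⟨h, _⟩ | ⟨h, _⟩ <;> rw [h]
    · linarith [Real.exp_pos (-x)]
    · linarith [Real.exp_pos x]
  have hf : (0:ℝ) < ⌈q⌉₊.factorial := by exact_mod_cast Nat.factorial_pos _
  have h1 : |x| ^ q ≤ (1 + (⌈q⌉₊.factorial : ℝ)) * Real.exp |x| := by
    have hx := abs_nonneg x
    have he := Real.one_le_exp hx
    have hp := Real.pow_div_factorial_le_exp |x| hx ⌈q⌉₊
    rw [div_le_iff₀ hf] at hp
    rcases le_total |x| 1 with h | h
    · have := Real.rpow_le_one hx h hq.le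
      nlinarith
    · have : |x| ^ q ≤ |x| ^ (⌈q⌉₊ : ℝ) := Real.rpow_le_rpow_of_exponent_le h (Nat.le_ceil q)
      rw [Real.rpow_natCast] at this
      nlinarith
  exact h1.trans (by gcongr)

/-- The upper Khintchine inequality for normalized coefficients: `∏ cosh α_j ≤ exp (∑ α_j² / 2)`
bounds the exponential moment, which dominates every power. -/
lemma radSum_moment {N : ℕ} (α : Fin N → ℝ) (hα : ∑ j, α j ^ 2 = 1) {q : ℝ} (hq : 0 < q) :
    ∫ t in (0:ℝ)..1, |radSum α t| ^ q ≤ momC q := by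
  have hc : ∏ j, Real.cosh (α j) ≤ Real.exp (1 / 2) := by
    calc ∏ j, Real.cosh (α j) ≤ ∏ j, Real.exp (α j ^ 2 / 2) :=
          Finset.prod_le_prod (fun j _ => (Real.cosh_pos _).le) fun j _ => Real.cosh_le_exp_half_sq _
      _ = Real.exp (1 / 2) := by rw [← Real.exp_sum, ← Finset.sum_div, hα]
  have i1 := radSum_integrable α (F := fun x => |x| ^ q)
    (continuous_abs.rpow_const fun _ => Or.inr hq.le) 0 1
  have i2 := radSum_integrable α (F := fun x => Real.exp x) (by fun_prop) 0 1
  have i3 := radSum_integrable α (F := fun x => Real.exp (-x)) (by fun_prop) 0 1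
  have e2 : ∫ t in (0:ℝ)..1, Real.exp (radSum α t) = ∏ j, Real.cosh (α j) := by
    simpa using radSum_exp α 0
  have e3 : ∫ t in (0:ℝ)..1, Real.exp (-radSum α t) = ∏ j, Real.cosh (α j) := by
    simpa [radSum] using radSum_exp (fun j => -α j) 0
  calc ∫ t in (0:ℝ)..1, |radSum α t| ^ q
      ≤ ∫ t in (0:ℝ)..1, (1 + (⌈q⌉₊.factorial : ℝ)) *
          (Real.exp (radSum α t) + Real.exp (-radSum α t)) :=
        intervalIntegral.integral_mono zero_le_one i1 ((i2.add i3).const_mul _)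
          fun t => abs_rpow_le_exp hq _
    _ = (1 + (⌈q⌉₊.factorial : ℝ)) * (∏ j, Real.cosh (α j) + ∏ j, Real.cosh (α j)) := by
        rw [intervalIntegral.integral_const_mul, intervalIntegral.integral_add i2 i3, e2, e3]
    _ ≤ momC q := by
        unfold momC
        gcongr
        linarith

/-- The lower Khintchine inequality for normalized coefficients: the second moment is controlled by
the `q`-th moment where `|S|` is moderate and by the fourth moment where it is large. -/
lemma radSum_lower {N : ℕ} (α : Fin N → ℝ) (hα : ∑ j, α j ^ 2 = 1) {q : ℝ} (hq : 0 < q)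
    (hq1 : q < 1) :
    1 ≤ 2 * (2 * momC 4) * ∫ t in (0:ℝ)..1, |radSum α t| ^ q := by
  have i1 := radSum_integrable α (F := fun x => |x| ^ q)
    (continuous_abs.rpow_const fun _ => Or.inr hq.le) 0 1
  have i2 := radSum_integrable α (F := fun x => x ^ 2) (by fun_prop) 0 1
  have i4 := radSum_integrable α (F := fun x => |x| ^ (4:ℝ))
    (continuous_abs.rpow_const fun _ => Or.inr (by norm_num)) 0 1
  have hK := momC_ge (q := 4)
  set K := momC 4
  have hm := radSum_moment α hα (q := 4) (by norm_num)
  have hs : ∫ t in (0:ℝ)..1, radSum α t ^ 2 = 1 := by simpa [hα] using radSum_sq α 0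
  -- The two regimes of the pointwise bound are separated at `x² = 2 * K`.
  have key : ∀ x : ℝ, x ^ 2 ≤ 2 * K * |x| ^ q + |x| ^ (4:ℝ) * (1 / (2 * K)) := by
    intro x
    have hx := abs_nonneg x
    have e4 : |x| ^ (4:ℝ) = |x| ^ 4 := by exact_mod_cast Real.rpow_natCast |x| 4
    rw [← sq_abs, e4]
    set y := |x|
    have hyq := Real.rpow_nonneg hx q
    rcases le_total (y ^ 2) (2 * K) with h | h
    · have : y ^ 2 ≤ 2 * K * y ^ q := by
        rcases le_total y 1 with h1 | h1
        · have h2 : y ^ (2:ℝ) ≤ y ^ q := Real.rpow_le_rpow_of_exponent_ge_of_imp hx h1 (by linarith)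
            (by intro _ h; exact absurd h (by norm_num))
          rw [Real.rpow_two] at h2
          nlinarith
        · have := Real.one_le_rpow h1 hq.le
          nlinarith
      have h3 : 0 ≤ y ^ 4 * (1 / (2 * K)) := by positivity
      linarith
    · have : y ^ 2 ≤ y ^ 4 * (1 / (2 * K)) := by
        rw [mul_one_div, le_div_iff₀ (by linarith)]
        nlinarith [sq_nonneg y]
      have h3 : 0 ≤ 2 * K * y ^ q := by positivity
      linarith
  have hI := intervalIntegral.integral_mono zero_le_one i2
    ((i1.const_mul (2 * K)).add (i4.mul_const (1 / (2 * K)))) fun t => key (radSum α t)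
  rw [intervalIntegral.integral_add (i1.const_mul (2 * K)) (i4.mul_const (1 / (2 * K))),
    intervalIntegral.integral_const_mul, intervalIntegral.integral_mul_const, hs] at hI
  have : (∫ t in (0:ℝ)..1, |radSum α t| ^ (4:ℝ)) * (1 / (2 * K)) ≤ 1 / 2 := by
    rw [mul_one_div, div_le_iff₀ (by linarith)]; linarith
  linarith

lemma radSum_smul {N : ℕ} (α : Fin N → ℝ) (c t : ℝ) :
    radSum (fun j => c * α j) t = c * radSum α t := by
  simp [radSum, Finset.mul_sum, mul_assoc]

/-- Homogeneity: a comparison of the `L^q` and `ℓ²` norms need only be checked on coefficient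
sequences of unit `ℓ²` norm. -/
lemma radSum_normalize {N : ℕ} (α : Fin N → ℝ) {q : ℝ} (hq : 0 < q) :
    (∑ j, α j ^ 2 = 0 ∧ (∫ t in (0:ℝ)..1, |radSum α t| ^ q) ^ (1 / q) = 0) ∨
    ∃ β : Fin N → ℝ, ∑ j, β j ^ 2 = 1 ∧
      (∫ t in (0:ℝ)..1, |radSum α t| ^ q) ^ (1 / q) =
        (∫ t in (0:ℝ)..1, |radSum β t| ^ q) ^ (1 / q) * (∑ j, α j ^ 2) ^ (1/2 : ℝ) := by
  have hn : 0 ≤ ∑ j, α j ^ 2 := Finset.sum_nonneg fun j _ => sq_nonneg _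
  rcases hn.eq_or_lt with h | h
  · left
    refine ⟨h.symm, ?_⟩
    have hz : ∀ j, α j = 0 := fun j => by
      have := (Finset.sum_eq_zero_iff_of_nonneg (fun j _ => sq_nonneg (α j))).1 h.symm j
        (Finset.mem_univ _)
      simpa using this
    simp [radSum, hz, hq.ne']
  · right
    set σ := (∑ j, α j ^ 2) ^ (1/2 : ℝ) with hσ
    have hσp : 0 < σ := Real.rpow_pos_of_pos h _
    have hσ2 : σ ^ 2 = ∑ j, α j ^ 2 := by
      rw [hσ, ← Real.sqrt_eq_rpow, Real.sq_sqrt hn]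
    refine ⟨fun j => σ⁻¹ * α j, ?_, ?_⟩
    · simp only [mul_pow, ← Finset.mul_sum, ← hσ2]
      field_simp
    · have e : ∀ t, |radSum α t| ^ q = σ ^ q * |radSum (fun j => σ⁻¹ * α j) t| ^ q := fun t => by
        rw [radSum_smul, abs_mul, abs_of_pos (inv_pos.2 hσp),
          Real.mul_rpow (inv_pos.2 hσp).le (abs_nonneg _), ← mul_assoc,
          ← Real.mul_rpow hσp.le (inv_pos.2 hσp).le, mul_inv_cancel₀ hσp.ne', Real.one_rpow, one_mul]
      simp only [e]
      have hI : 0 ≤ ∫ t in (0:ℝ)..1, |radSum (fun j => σ⁻¹ * α j) t| ^ q :=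
        intervalIntegral.integral_nonneg zero_le_one fun t _ => by positivity
      rw [intervalIntegral.integral_const_mul, Real.mul_rpow (by positivity) hI,
        ← Real.rpow_mul hσp.le, mul_one_div_cancel hq.ne', Real.rpow_one, mul_comm]

lemma one_le_khintchineB {q : ℝ} (hq : 0 < q) : 1 ≤ khintchineB q := by
  refine le_csInf ⟨momC q ^ (1 / q), ?_, fun N α => ?_⟩ ?_
  · have := momC_ge (q := q); positivity
  · change (∫ t in (0:ℝ)..1, |radSum α t| ^ q) ^ (1 / q) ≤ _
    rcases radSum_normalize α hq with ⟨h0, h⟩ | ⟨β, hβ, h⟩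
    · rw [h, h0]; simp
    · rw [h]
      have hI : 0 ≤ ∫ t in (0:ℝ)..1, |radSum β t| ^ q :=
        intervalIntegral.integral_nonneg zero_le_one fun t _ => by positivity
      gcongr
      exact radSum_moment β hβ hq
  · rintro B ⟨_, hB⟩
    simpa [rad_abs] using hB 1 fun _ => 1

lemma khintchineA_pos_le {q : ℝ} (hq : 0 < q) (hq1 : q < 1) :
    0 < khintchineA q ∧ khintchineA q ≤ 1 := by
  have hub : ∀ A ∈ {A : ℝ | 0 ≤ A ∧ ∀ (N : ℕ) (α : Fin N → ℝ),
      A * (∑ j, α j ^ 2) ^ (1/2 : ℝ) ≤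
        (∫ t in (0:ℝ)..1, |∑ j, α j * rademacher j t| ^ q) ^ (1/q)}, A ≤ 1 := by
    rintro A ⟨_, hA⟩
    simpa [rad_abs] using hA 1 fun _ => 1
  have hK := momC_ge (q := 4)
  have hpos : 0 < (1 / (2 * (2 * momC 4))) ^ (1 / q) := by positivity
  have hmem : (1 / (2 * (2 * momC 4))) ^ (1 / q) ∈ {A : ℝ | 0 ≤ A ∧ ∀ (N : ℕ) (α : Fin N → ℝ),
      A * (∑ j, α j ^ 2) ^ (1/2 : ℝ) ≤
        (∫ t in (0:ℝ)..1, |∑ j, α j * rademacher j t| ^ q) ^ (1/q)} := by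
    refine ⟨hpos.le, fun N α => ?_⟩
    change _ ≤ (∫ t in (0:ℝ)..1, |radSum α t| ^ q) ^ (1 / q)
    rcases radSum_normalize α hq with ⟨h0, h⟩ | ⟨β, hβ, h⟩
    · rw [h, h0]; simp
    · rw [h]
      have := radSum_lower β hβ hq hq1
      gcongr
      rw [div_le_iff₀ (by positivity)]; linarith
  exact ⟨hpos.trans_le (le_csSup ⟨1, hub⟩ hmem), csSup_le ⟨_, hmem⟩ hub⟩

lemma one_le_cc {p p₁ p₂ : ℝ} (h1 : 1 ≤ p₁) (h2 : 1 ≤ p₂) (hp : 0 < p) : 1 ≤ cc p p₁ p₂ := by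
  unfold cc
  split_ifs with h
  · obtain ⟨hA0, hA1⟩ := khintchineA_pos_le hp h
    have hB1 := one_le_khintchineB (q := p₁) (by linarith)
    have hB2 := one_le_khintchineB (q := p₂) (by linarith)
    rw [le_div_iff₀ (by positivity)]
    nlinarith [mul_le_mul hB1 hB2 zero_le_one (by linarith)]
  · exact le_rfl

/-! ### Characters and Gaussians -/

lemma norm_rch {ι : Type} [Fintype ι] (ξ x : ι → ℝ) : ‖rch ξ x‖ = 1 := by
  unfold rch
  rw [show (2 * Real.pi * Complex.I * ((∑ i, ξ i * x i : ℝ) : ℂ)) =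
    ((2 * Real.pi * ∑ i, ξ i * x i : ℝ) : ℂ) * Complex.I by push_cast; ring]
  exact Complex.norm_exp_ofReal_mul_I _

lemma rch_add {ι : Type} [Fintype ι] (ξ η x : ι → ℝ) : rch (ξ + η) x = rch ξ x * rch η x := by
  unfold rch
  rw [← Complex.exp_add]
  congr 1
  simp only [Pi.add_apply, add_mul, Finset.sum_add_distrib]
  push_cast; ring

lemma rch_comm {ι : Type} [Fintype ι] (ξ x : ι → ℝ) : rch ξ x = rch x ξ := by
  unfold rch; simp only [mul_comm]

lemma rch_smul {ι : Type} [Fintype ι] (c : ℝ) (ξ x : ι → ℝ) : rch (c • ξ) x = rch ξ (c • x) := by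
  unfold rch; simp only [Pi.smul_apply, smul_eq_mul]; congr 4 with i; ring

lemma conj_rch {ι : Type} [Fintype ι] (ξ x : ι → ℝ) :
    (starRingEnd ℂ) (rch ξ x) = rch (-ξ) x := by
  unfold rch
  rw [← Complex.exp_conj]
  congr 1
  simp only [map_mul, Complex.conj_ofReal, Complex.conj_I, Pi.neg_apply, neg_mul,
    Finset.sum_neg_distrib, Complex.ofReal_neg, map_ofNat]
  ring

lemma continuous_rch {ι : Type} [Fintype ι] :
    Continuous fun z : (ι → ℝ) × (ι → ℝ) => rch z.1 z.2 := by
  unfold rch; fun_prop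

@[fun_prop]
lemma Continuous.rch {ι X : Type} [Fintype ι] [TopologicalSpace X] {f g : X → ι → ℝ}
    (hf : Continuous f) (hg : Continuous g) : Continuous fun x => rch (f x) (g x) :=
  continuous_rch.comp (hf.prodMk hg)

/-- The Gaussian `e^{-πw|x|²}`. -/
def gau {ι : Type} [Fintype ι] (w : ℝ) (x : ι → ℝ) : ℝ := Real.exp (-(Real.pi * w) * ∑ i, x i ^ 2)

/-- The Fourier transform `w^{-d/2} e^{-π|ξ|²/w}` of the Gaussian `gau w`. -/
def gauHat {ι : Type} [Fintype ι] (w : ℝ) (ξ : ι → ℝ) : ℝ :=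
  (1 / w) ^ ((Fintype.card ι : ℝ) / 2) * gau (1 / w) ξ

@[fun_prop]
lemma continuous_gau {ι : Type} [Fintype ι] (w : ℝ) : Continuous (gau (ι := ι) w) := by
  unfold gau; fun_prop

@[fun_prop]
lemma continuous_gauHat {ι : Type} [Fintype ι] (w : ℝ) : Continuous (gauHat (ι := ι) w) := by
  unfold gauHat; fun_prop

lemma gau_pos {ι : Type} [Fintype ι] (w : ℝ) (x : ι → ℝ) : 0 < gau w x := Real.exp_pos _

lemma gau_le_one {ι : Type} [Fintype ι] {w : ℝ} (hw : 0 ≤ w) (x : ι → ℝ) : gau w x ≤ 1 := by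
  unfold gau
  rw [Real.exp_le_one_iff, neg_mul, neg_nonpos]
  have := Real.pi_pos
  have : 0 ≤ ∑ i, x i ^ 2 := Finset.sum_nonneg fun i _ => sq_nonneg _
  positivity

lemma gauHat_nonneg {ι : Type} [Fintype ι] {w : ℝ} (hw : 0 < w) (x : ι → ℝ) : 0 ≤ gauHat w x := by
  unfold gauHat; have := gau_pos (1 / w) x; positivity

lemma gau_add {ι : Type} [Fintype ι] (v w : ℝ) (x : ι → ℝ) : gau (v + w) x = gau v x * gau w x := by
  unfold gau; rw [← Real.exp_add]; congr 1; ring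

lemma gau_rpow {ι : Type} [Fintype ι] (w q : ℝ) (x : ι → ℝ) : gau w x ^ q = gau (w * q) x := by
  unfold gau; rw [← Real.exp_mul]; congr 1; ring

lemma gau_smul {ι : Type} [Fintype ι] (w c : ℝ) (x : ι → ℝ) : gau w (c • x) = gau (w * c ^ 2) x := by
  unfold gau
  simp only [Pi.smul_apply, smul_eq_mul, mul_pow, ← Finset.mul_sum]
  congr 1; ring

lemma gauHat_scale {ι : Type} [Fintype ι] {w t : ℝ} (hw : 0 < w) (ht : 0 < t) (u : ι → ℝ) :
    gauHat (w * t ^ 2) (t • u) = (t ^ Fintype.card ι)⁻¹ * gauHat w u := by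
  unfold gauHat
  rw [gau_smul, show 1 / (w * t ^ 2) * t ^ 2 = 1 / w by field_simp,
    show 1 / (w * t ^ 2) = 1 / w * (t⁻¹) ^ (2:ℝ) by rw [Real.rpow_two]; field_simp,
    Real.mul_rpow (by positivity) (by positivity), ← Real.rpow_mul (by positivity),
    mul_div_cancel₀ _ (by norm_num), Real.rpow_natCast, inv_pow]
  ring

lemma rch_mul_gau {ι : Type} [Fintype ι] (w : ℝ) (θ x : ι → ℝ) :
    rch θ x * gau w x = Complex.exp (-((Real.pi * w : ℝ) : ℂ) * ∑ i, (x i : ℂ) ^ 2 +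
      ∑ i, (2 * Real.pi * Complex.I * θ i) * x i) := by
  unfold rch gau
  rw [Complex.ofReal_exp, ← Complex.exp_add]
  congr 1
  push_cast
  rw [Finset.mul_sum, add_comm]
  congr 1
  exact Finset.sum_congr rfl fun i _ => by ring

lemma integrable_rch_mul_gau {ι : Type} [Fintype ι] {w : ℝ} (hw : 0 < w) (θ : ι → ℝ) :
    Integrable fun x : ι → ℝ => rch θ x * gau w x := by
  simp only [rch_mul_gau]
  refine GaussianFourier.integrable_cexp_neg_mul_sum_add ?_ _
  rw [Complex.ofReal_re]; positivity

lemma integral_rch_mul_gau {ι : Type} [Fintype ι] {w : ℝ} (hw : 0 < w) (θ : ι → ℝ) :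
    ∫ x : ι → ℝ, rch θ x * gau w x = gauHat w θ := by
  simp only [rch_mul_gau]
  rw [GaussianFourier.integral_cexp_neg_mul_sum_add (by rw [Complex.ofReal_re]; positivity)]
  have hpi := Real.pi_ne_zero
  unfold gauHat gau
  rw [Complex.ofReal_mul ((1 / w) ^ ((Fintype.card ι : ℝ) / 2)), Complex.ofReal_exp,
    Complex.ofReal_cpow (by positivity)]
  have hpc : (Real.pi : ℂ) ≠ 0 := by exact_mod_cast hpi
  have hwc : (w : ℂ) ≠ 0 := by exact_mod_cast hw.ne'
  congr 1
  · congr 1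
    · push_cast; field_simp
    · push_cast; rfl
  · congr 1
    push_cast
    simp only [mul_pow, Complex.I_sq, ← Finset.mul_sum]
    field_simp
    ring

lemma integrable_gau {ι : Type} [Fintype ι] {w : ℝ} (hw : 0 < w) :
    Integrable (gau (ι := ι) w) := by
  have h := (integrable_rch_mul_gau hw (0 : ι → ℝ)).re
  refine h.congr (ae_of_all _ fun x => ?_)
  simp [rch]

lemma integrable_gauHat {ι : Type} [Fintype ι] {w : ℝ} (hw : 0 < w) :
    Integrable (gauHat (ι := ι) w) := (integrable_gau (by positivity)).const_mul _

lemma integral_gau_one {ι : Type} [Fintype ι] : ∫ x : ι → ℝ, gau 1 x = 1 := by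
  have h := integral_rch_mul_gau one_pos (0 : ι → ℝ)
  have e : ∀ x : ι → ℝ, rch 0 x * gau 1 x = ((gau 1 x : ℝ) : ℂ) := fun x => by simp [rch]
  simp only [e] at h
  rw [integral_complex_ofReal] at h
  have h2 : gauHat 1 (0 : ι → ℝ) = 1 := by simp [gauHat, gau]
  rw [h2] at h
  exact_mod_cast h

/-- Fourier inversion for Gaussians. -/
lemma integral_gauHat_mul_rch {ι : Type} [Fintype ι] {w : ℝ} (hw : 0 < w) (y : ι → ℝ) :
    ∫ u : ι → ℝ, (gauHat w u : ℂ) * rch u y = gau w y := by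
  have h := integral_rch_mul_gau (w := 1 / w) (by positivity) y
  have e : ∀ u, (gauHat w u : ℂ) * rch u y =
      (((1 / w) ^ ((Fintype.card ι : ℝ) / 2) : ℝ) : ℂ) * (rch y u * gau (1 / w) u) := fun u => by
    unfold gauHat; rw [rch_comm u y]; push_cast; ring
  simp only [e]
  rw [integral_const_mul, h, ← Complex.ofReal_mul]
  unfold gauHat
  rw [one_div_one_div, ← mul_assoc, ← Real.mul_rpow (by positivity) hw.le,
    one_div_mul_cancel hw.ne', Real.one_rpow, one_mul]

/-! ### Averages of dilated periodic functions -/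

lemma tendsto_gauHat {d : ℕ} {θ : Fin d → ℝ} (hθ : θ ≠ 0) :
    Tendsto (fun t : ℝ => gauHat 1 (t⁻¹ • θ)) (𝓝[>] 0) (𝓝 0) := by
  have hs : 0 < ∑ i, θ i ^ 2 := by
    obtain ⟨i, hi⟩ := Function.ne_iff.1 hθ
    exact Finset.sum_pos' (fun i _ => sq_nonneg _) ⟨i, Finset.mem_univ i, by
      have : θ i ≠ 0 := hi
      positivity⟩
  have e : ∀ t : ℝ, gauHat 1 (t⁻¹ • θ) =
      Real.exp (-((Real.pi * ∑ i, θ i ^ 2) * (t⁻¹) ^ 2)) := fun t => by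
    unfold gauHat
    rw [gau_smul]
    unfold gau
    simp only [div_one, Real.one_rpow, one_mul]
    congr 1; ring
  simp only [e]
  refine Real.tendsto_exp_neg_atTop_nhds_zero.comp ?_
  refine Tendsto.const_mul_atTop (by have := Real.pi_pos; positivity) ?_
  exact (tendsto_pow_atTop two_ne_zero).comp tendsto_inv_nhdsGT_zero

instance (d : ℕ) : IsProbabilityMeasure (torusMeasure d) := ⟨by
  rw [torusMeasure, Measure.restrict_apply_univ, volume_pi_pi]; simp⟩

lemma integral_torus_rch {d : ℕ} (n : Fin d → ℤ) :
    ∫ x, rch (fun i => (n i : ℝ)) x ∂torusMeasure d = if n = 0 then 1 else 0 := by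
  split_ifs with h
  · subst h; simp [rch]
  · obtain ⟨i, hi⟩ := Function.ne_iff.1 h
    have hi' : (n i : ℂ) ≠ 0 := by exact_mod_cast hi
    have e : ∀ x : Fin d → ℝ, rch (fun i => (n i : ℝ)) x =
        ∏ i, Complex.exp ((2 * Real.pi * Complex.I * n i) * x i) := fun x => by
      unfold rch
      rw [← Complex.exp_sum]
      congr 1
      push_cast
      rw [Finset.mul_sum]
      exact Finset.sum_congr rfl fun i _ => by ring
    simp only [e]
    rw [torusMeasure, volume_pi, Measure.restrict_pi_pi,
      integral_fintype_prod_eq_prod (f := fun i (s : ℝ) =>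
        Complex.exp ((2 * Real.pi * Complex.I * n i) * s))]
    refine Finset.prod_eq_zero (Finset.mem_univ i) ?_
    rw [integral_Ico_eq_integral_Ioc, ← intervalIntegral.integral_of_le zero_le_one,
      integral_exp_mul_complex (mul_ne_zero Complex.two_pi_I_ne_zero hi')]
    have : Complex.exp (2 * Real.pi * Complex.I * n i) = 1 := by
      rw [mul_comm]; exact Complex.exp_int_mul_two_pi_mul_I _
    simp [this]

lemma mFourier_coe {d : ℕ} (n : Fin d → ℤ) (ε x : Fin d → ℝ) :
    UnitAddTorus.mFourier n (fun i => ((ε i * x i : ℝ) : UnitAddCircle)) =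
      rch (fun i => ε i * (n i : ℝ)) x := by
  simp only [UnitAddTorus.mFourier, ContinuousMap.coe_mk, fourier_coe_apply, rch,
    ← Complex.exp_sum]
  congr 1
  push_cast
  rw [Finset.mul_sum]
  exact Finset.sum_congr rfl fun i _ => by ring

lemma continuous_toTorus {d : ℕ} (ε : Fin d → ℝ) (c : ℝ) :
    Continuous fun y : Fin d → ℝ => (fun i => ((ε i * (c • y) i : ℝ) : UnitAddCircle)) := by
  refine continuous_pi fun i => ?_
  exact (AddCircle.continuous_mk' 1).comp (by fun_prop)

/-- Gaussian averages of a periodic function dilated by `1/t` converge to its mean over a period.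
The means are uniformly bounded linear functionals, so it suffices to treat characters, which span
a dense subspace; there the statement is the decay of the Gaussian's Fourier transform. -/
lemma tendsto_average {d : ℕ} {ε : Fin d → ℝ} (hε : ∀ i, 0 < ε i)
    (H : C(UnitAddTorus (Fin d), ℂ)) :
    Tendsto (fun t : ℝ => ∫ y : Fin d → ℝ,
        H (fun i => ((ε i * (t⁻¹ • y) i : ℝ) : UnitAddCircle)) * gau 1 y) (𝓝[>] 0)
      (𝓝 (∫ x, H (fun i => ((1 * x i : ℝ) : UnitAddCircle)) ∂torusMeasure d)) := by
  have int1 : ∀ (H : C(UnitAddTorus (Fin d), ℂ)) (t : ℝ), Integrable fun y : Fin d → ℝ =>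
      H (fun i => ((ε i * (t⁻¹ • y) i : ℝ) : UnitAddCircle)) * (gau 1 y : ℂ) := fun H t =>
    (integrable_gau one_pos).ofReal.bdd_mul (c := ‖H‖)
      (H.continuous.comp (continuous_toTorus ε t⁻¹)).aestronglyMeasurable
      (ae_of_all _ fun y => H.norm_coe_le_norm _)
  have ct : Continuous fun x : Fin d → ℝ => (fun i => ((1 * x i : ℝ) : UnitAddCircle)) := by
    simpa using continuous_toTorus (d := d) 1 1
  have int2 : ∀ (H : C(UnitAddTorus (Fin d), ℂ)), Integrable (fun x : Fin d → ℝ =>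
      H (fun i => ((1 * x i : ℝ) : UnitAddCircle))) (torusMeasure d) := fun H =>
    Integrable.of_bound (H.continuous.comp ct).aestronglyMeasurable ‖H‖
      (ae_of_all _ fun y => H.norm_coe_le_norm _)
  let S : Submodule ℂ C(UnitAddTorus (Fin d), ℂ) :=
    { carrier := {H | Tendsto (fun t : ℝ => ∫ y : Fin d → ℝ,
        H (fun i => ((ε i * (t⁻¹ • y) i : ℝ) : UnitAddCircle)) * gau 1 y) (𝓝[>] 0)
        (𝓝 (∫ x, H (fun i => ((1 * x i : ℝ) : UnitAddCircle)) ∂torusMeasure d))}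
      add_mem' := fun {F G} hF hG => by
        simp only [Set.mem_ofPred_eq, ContinuousMap.add_apply, add_mul] at hF hG ⊢
        rw [integral_add (int2 F) (int2 G)]
        refine (hF.add hG).congr fun t => ?_
        rw [integral_add (int1 F t) (int1 G t)]
      zero_mem' := by simp
      smul_mem' := fun c F hF => by
        simp only [Set.mem_ofPred_eq, ContinuousMap.smul_apply, smul_eq_mul, mul_assoc] at hF ⊢
        rw [integral_const_mul]
        refine (hF.const_mul c).congr fun t => ?_
        rw [integral_const_mul] }
  have hS : Submodule.span ℂ (Set.range (UnitAddTorus.mFourier (d := Fin d))) ≤ S := by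
    rw [Submodule.span_le]
    rintro _ ⟨n, rfl⟩
    change Tendsto _ _ _
    simp only [mFourier_coe]
    simp only [one_mul]
    rw [integral_torus_rch]
    have e : ∀ t : ℝ, ∫ y : Fin d → ℝ, rch (fun i => ε i * (n i : ℝ)) (t⁻¹ • y) * gau 1 y =
        gauHat 1 (t⁻¹ • fun i => ε i * (n i : ℝ)) := fun t => by
      rw [← integral_rch_mul_gau one_pos]; simp only [rch_smul]
    simp only [e]
    split_ifs with h
    · subst h
      have : gauHat 1 (0 : Fin d → ℝ) = 1 := by simp [gauHat, gau]
      have e2 : ∀ t : ℝ, (t⁻¹ • fun i : Fin d => ε i * (((0 : Fin d → ℤ) i : ℤ) : ℝ)) = 0 := fun t => by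
        ext i; simp
      simp only [e2, this]
      exact tendsto_const_nhds
    · have := tendsto_gauHat (θ := fun i => ε i * (n i : ℝ)) (fun h0 => h (funext fun i => by
        have := congrFun h0 i
        simpa [(hε i).ne'] using this))
      exact_mod_cast (Complex.continuous_ofReal.tendsto 0).comp this
  rw [Metric.tendsto_nhds]
  intro δ hδ
  have hden : H ∈ closure (Submodule.span ℂ (Set.range (UnitAddTorus.mFourier (d := Fin d))) :
      Set C(UnitAddTorus (Fin d), ℂ)) := by
    rw [← Submodule.topologicalClosure_coe, UnitAddTorus.span_mFourier_closure_eq_top]; trivial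
  obtain ⟨P, hP, hHP⟩ := Metric.mem_closure_iff.1 hden (δ / 3) (by positivity)
  have hPS : P ∈ S := hS hP
  have hPt := Metric.tendsto_nhds.1 (show Tendsto _ _ _ from hPS) (δ / 3) (by positivity)
  rw [dist_eq_norm] at hHP
  filter_upwards [hPt] with t ht
  have b1 : dist (∫ y : Fin d → ℝ,
      H (fun i => ((ε i * (t⁻¹ • y) i : ℝ) : UnitAddCircle)) * (gau 1 y : ℂ)) (∫ y : Fin d → ℝ,
      P (fun i => ((ε i * (t⁻¹ • y) i : ℝ) : UnitAddCircle)) * (gau 1 y : ℂ)) ≤ ‖H - P‖ := by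
    rw [dist_eq_norm, ← integral_sub (int1 H t) (int1 P t)]
    calc _ ≤ ∫ y : Fin d → ℝ, ‖H - P‖ * gau 1 y := by
          refine norm_integral_le_of_norm_le ((integrable_gau one_pos).const_mul _)
            (ae_of_all _ fun y => ?_)
          rw [← sub_mul, norm_mul, Complex.norm_real, Real.norm_of_nonneg (gau_pos _ _).le]
          exact mul_le_mul_of_nonneg_right ((H - P).norm_coe_le_norm _) (gau_pos _ _).le
      _ = ‖H - P‖ := by rw [integral_const_mul, integral_gau_one, mul_one]
  have b2 : dist (∫ x, P (fun i => ((1 * x i : ℝ) : UnitAddCircle)) ∂torusMeasure d)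
      (∫ x, H (fun i => ((1 * x i : ℝ) : UnitAddCircle)) ∂torusMeasure d) ≤ ‖H - P‖ := by
    rw [dist_comm, dist_eq_norm, ← integral_sub (int2 H) (int2 P)]
    have := norm_integral_le_of_norm_le_const (μ := torusMeasure d) (C := ‖H - P‖)
      (f := fun x : Fin d → ℝ => H (fun i => ((1 * x i : ℝ) : UnitAddCircle)) -
        P (fun i => ((1 * x i : ℝ) : UnitAddCircle)))
      (ae_of_all _ fun y => (H - P).norm_coe_le_norm _)
    simpa using this
  have := dist_triangle4 (∫ y : Fin d → ℝ,
      H (fun i => ((ε i * (t⁻¹ • y) i : ℝ) : UnitAddCircle)) * (gau 1 y : ℂ)) (∫ y : Fin d → ℝ,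
      P (fun i => ((ε i * (t⁻¹ • y) i : ℝ) : UnitAddCircle)) * (gau 1 y : ℂ))
      (∫ x, P (fun i => ((1 * x i : ℝ) : UnitAddCircle)) ∂torusMeasure d)
      (∫ x, H (fun i => ((1 * x i : ℝ) : UnitAddCircle)) ∂torusMeasure d)
  linarith

/-- The trigonometric polynomial with coefficients `c` and frequencies `ε ν`. -/
def trig {d : ℕ} {κ : Type} (s : Finset κ) (c : κ → ℂ) (ν : κ → Fin d → ℤ) (ε x : Fin d → ℝ) : ℂ :=
  ∑ k ∈ s, c k * rch (fun i => ε i * (ν k i : ℝ)) x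

@[fun_prop]
lemma continuous_trig {d : ℕ} {κ : Type} (s : Finset κ) (c : κ → ℂ) (ν : κ → Fin d → ℤ)
    (ε : Fin d → ℝ) : Continuous (trig s c ν ε) := by
  unfold trig; fun_prop

lemma norm_trig_le {d : ℕ} {κ : Type} (s : Finset κ) (c : κ → ℂ) (ν : κ → Fin d → ℤ)
    (ε x : Fin d → ℝ) : ‖trig s c ν ε x‖ ≤ ∑ k ∈ s, ‖c k‖ := by
  refine (norm_sum_le _ _).trans (le_of_eq ?_)
  simp [norm_rch]

/-- `tendsto_average` for the continuous function `|S|^q` on the torus, `S` a trigonometric polynomial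
with integer frequencies. -/
lemma tendsto_average_trig {d : ℕ} {κ : Type} (s : Finset κ) (c : κ → ℂ) (ν : κ → Fin d → ℤ)
    {ε : Fin d → ℝ} (hε : ∀ i, 0 < ε i) {q : ℝ} (hq : 0 < q) :
    Tendsto (fun t : ℝ => ∫ y : Fin d → ℝ, ‖trig s c ν ε (t⁻¹ • y)‖ ^ q * gau 1 y) (𝓝[>] 0)
      (𝓝 (∫ x, ‖trig s c ν 1 x‖ ^ q ∂torusMeasure d)) := by
  let H : C(UnitAddTorus (Fin d), ℂ) :=
    ⟨fun z => ((‖∑ k ∈ s, c k * UnitAddTorus.mFourier (ν k) z‖ ^ q : ℝ) : ℂ), by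
      refine Complex.continuous_ofReal.comp (Continuous.rpow_const ?_ fun _ => Or.inr hq.le)
      fun_prop⟩
  have h := tendsto_average hε H
  have e : ∀ ε x : Fin d → ℝ, H (fun i => ((ε i * x i : ℝ) : UnitAddCircle)) =
      ((‖trig s c ν ε x‖ ^ q : ℝ) : ℂ) := fun ε x => by
    simp only [H, ContinuousMap.coe_mk, mFourier_coe, trig]
  simp only [e, ← Complex.ofReal_mul, integral_complex_ofReal] at h
  have := (Complex.continuous_re.tendsto _).comp h
  simp only [Function.comp_def, Complex.ofReal_re] at this
  exact this

/-! ### Gaussian-damped trigonometric polynomials on `ℝ^d` -/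

lemma gauHat_sub_comm {ι : Type} [Fintype ι] (w : ℝ) (ξ θ : ι → ℝ) :
    gauHat w (ξ - θ) = gauHat w (θ - ξ) := by
  unfold gauHat gau
  congr 4 with i
  simp only [Pi.sub_apply]; ring

/-- The dilated frequency `ε n = (ε₁n₁, …, ε_d n_d)`. -/
def fr {d : ℕ} (ε : Fin d → ℝ) (n : Fin d → ℤ) : Fin d → ℝ := fun i => ε i * (n i : ℝ)

/-- A trigonometric polynomial damped by the wide Gaussian `e^{-πwt²|x|²}`, `t → 0`. -/
def bump {d : ℕ} {κ : Type} (s : Finset κ) (c : κ → ℂ) (ν : κ → Fin d → ℤ) (ε : Fin d → ℝ)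
    (w t : ℝ) (x : Fin d → ℝ) : ℂ := trig s c ν ε x * gau (w * t ^ 2) x

section bump
variable {d : ℕ} {κ : Type} (s : Finset κ) (c : κ → ℂ) (ν : κ → Fin d → ℤ) (ε : Fin d → ℝ)
  {w t : ℝ}

lemma bump_eq (x : Fin d → ℝ) : bump s c ν ε w t x =
    ∑ k ∈ s, c k * (rch (fr ε (ν k)) x * gau (w * t ^ 2) x) := by
  simp only [bump, trig, Finset.sum_mul, mul_assoc]; rfl

lemma integrable_bump (hw : 0 < w) (ht : 0 < t) : Integrable (bump s c ν ε w t) := by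
  simp only [funext (bump_eq s c ν ε)]
  exact integrable_finsetSum _ fun k _ =>
    (integrable_rch_mul_gau (by positivity) _).const_mul _

lemma rft_bump (hw : 0 < w) (ht : 0 < t) (ξ : Fin d → ℝ) : rft (bump s c ν ε w t) ξ =
    ∑ k ∈ s, c k * gauHat (w * t ^ 2) (ξ - fr ε (ν k)) := by
  have hwt : 0 < w * t ^ 2 := by positivity
  have e : ∀ x, (starRingEnd ℂ) (rch ξ x) * bump s c ν ε w t x =
      ∑ k ∈ s, c k * (rch (fr ε (ν k) - ξ) x * gau (w * t ^ 2) x) := fun x => by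
    rw [bump_eq, Finset.mul_sum, conj_rch]
    refine Finset.sum_congr rfl fun k _ => ?_
    rw [sub_eq_add_neg, rch_add]; ring
  unfold rft
  simp only [e]
  rw [integral_finsetSum _ fun k _ => (integrable_rch_mul_gau hwt _).const_mul _]
  refine Finset.sum_congr rfl fun k _ => ?_
  rw [integral_const_mul, integral_rch_mul_gau hwt, gauHat_sub_comm]

lemma rSL1_bump (hw : 0 < w) (ht : 0 < t) : rSL1 (bump s c ν ε w t) := by
  refine ⟨integrable_bump s c ν ε hw ht, ?_⟩
  simp only [funext (rft_bump s c ν ε hw ht)]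
  exact integrable_finsetSum _ fun k _ =>
    ((integrable_gauHat (by positivity)).comp_sub_right _).ofReal.const_mul _

end bump

/-- The average of the symbol near `(θ₁, θ₂)` at scale `t`, against the transforms of two
Gaussians. -/
def locAvg {d : ℕ} (m : (Fin d → ℝ) → (Fin d → ℝ) → ℂ) (w₁ w₂ : ℝ) (θ₁ θ₂ : Fin d → ℝ) (t : ℝ)
    (y : Fin d → ℝ) : ℂ :=
  ∫ z : (Fin d → ℝ) × (Fin d → ℝ), (gauHat w₁ z.1 : ℂ) * (gauHat w₂ z.2 : ℂ) *
    m (θ₁ + t • z.1) (θ₂ + t • z.2) * rch (z.1 + z.2) y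

section symbol
variable {d : ℕ} {m : (Fin d → ℝ) → (Fin d → ℝ) → ℂ}
  (hmc : Continuous fun z : ((Fin d → ℝ) × (Fin d → ℝ)) => m z.1 z.2)
  {Cm : ℝ} (hmB : ∀ ξ η, ‖m ξ η‖ ≤ Cm) {w₁ w₂ : ℝ} (hw₁ : 0 < w₁) (hw₂ : 0 < w₂)

include hmc in
lemma measurable_locAvg (θ₁ θ₂ : Fin d → ℝ) (t : ℝ) :
    StronglyMeasurable (locAvg m w₁ w₂ θ₁ θ₂ t) := by
  have h : Continuous fun q : (Fin d → ℝ) × ((Fin d → ℝ) × (Fin d → ℝ)) =>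
      (gauHat w₁ q.2.1 : ℂ) * (gauHat w₂ q.2.2 : ℂ) *
        m (θ₁ + t • q.2.1) (θ₂ + t • q.2.2) * rch (q.2.1 + q.2.2) q.1 := by
    have hm' : Continuous fun q : (Fin d → ℝ) × ((Fin d → ℝ) × (Fin d → ℝ)) =>
        m (θ₁ + t • q.2.1) (θ₂ + t • q.2.2) :=
      hmc.comp (f := fun q : (Fin d → ℝ) × ((Fin d → ℝ) × (Fin d → ℝ)) =>
        (θ₁ + t • q.2.1, θ₂ + t • q.2.2)) (by fun_prop)
    fun_prop
  exact h.stronglyMeasurable.integral_prod_right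

include hmc hmB hw₁ hw₂ in
/-- The local averages of a bounded continuous symbol recover its value as the scale shrinks. -/
lemma tendsto_locAvg (θ₁ θ₂ y : Fin d → ℝ) :
    Tendsto (fun t => locAvg m w₁ w₂ θ₁ θ₂ t y) (𝓝[>] 0)
      (𝓝 (m θ₁ θ₂ * gau (w₁ + w₂) y)) := by
  have hlim : m θ₁ θ₂ * gau (w₁ + w₂) y = ∫ z : (Fin d → ℝ) × (Fin d → ℝ),
      (gauHat w₁ z.1 : ℂ) * (gauHat w₂ z.2 : ℂ) * m θ₁ θ₂ * rch (z.1 + z.2) y := by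
    have e : ∀ z : (Fin d → ℝ) × (Fin d → ℝ),
        (gauHat w₁ z.1 : ℂ) * (gauHat w₂ z.2 : ℂ) * m θ₁ θ₂ * rch (z.1 + z.2) y =
        m θ₁ θ₂ * (((gauHat w₁ z.1 : ℂ) * rch z.1 y) * ((gauHat w₂ z.2 : ℂ) * rch z.2 y)) :=
      fun z => by rw [rch_add]; ring
    simp only [e]
    rw [integral_const_mul, Measure.volume_eq_prod,
      integral_prod_mul (fun u => (gauHat w₁ u : ℂ) * rch u y) fun v => (gauHat w₂ v : ℂ) * rch v y,
      integral_gauHat_mul_rch hw₁, integral_gauHat_mul_rch hw₂, gau_add]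
    push_cast; rfl
  rw [hlim]
  refine tendsto_integral_filter_of_dominated_convergence
    (fun z => gauHat w₁ z.1 * gauHat w₂ z.2 * Cm) ?_ ?_ ?_ ?_
  · refine Eventually.of_forall fun t => Continuous.aestronglyMeasurable ?_
    have hm' : Continuous fun q : (Fin d → ℝ) × (Fin d → ℝ) =>
        m (θ₁ + t • q.1) (θ₂ + t • q.2) :=
      hmc.comp (f := fun q : (Fin d → ℝ) × (Fin d → ℝ) =>
        (θ₁ + t • q.1, θ₂ + t • q.2)) (by fun_prop)
    fun_prop
  · refine Eventually.of_forall fun t => ae_of_all _ fun z => ?_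
    have g1 := gauHat_nonneg hw₁ z.1
    have g2 := gauHat_nonneg hw₂ z.2
    simp only [norm_mul, norm_rch, mul_one, Complex.norm_real, Real.norm_of_nonneg g1,
      Real.norm_of_nonneg g2]
    exact mul_le_mul_of_nonneg_left (hmB _ _) (by positivity)
  · exact ((integrable_gauHat hw₁).mul_prod (integrable_gauHat hw₂)).mul_const _
  · refine ae_of_all _ fun z => ?_
    have h0 : Tendsto (fun t : ℝ => m (θ₁ + t • z.1) (θ₂ + t • z.2)) (𝓝[>] 0) (𝓝 (m θ₁ θ₂)) := by
      have : Continuous fun t : ℝ => m (θ₁ + t • z.1) (θ₂ + t • z.2) :=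
        hmc.comp (f := fun t : ℝ => (θ₁ + t • z.1, θ₂ + t • z.2)) (by fun_prop)
      have := this.tendsto 0
      simp only [zero_smul, add_zero] at this
      exact this.mono_left nhdsWithin_le_nhds
    exact (h0.const_mul _).mul_const _

lemma integral_affine {d : ℕ} (F : (Fin d → ℝ) × (Fin d → ℝ) → ℂ) (θ : (Fin d → ℝ) × (Fin d → ℝ))
    {t : ℝ} (ht : 0 < t) :
    ∫ z, F z = ((t ^ d * t ^ d : ℝ) : ℂ) * ∫ z, F (θ + t • z) := by
  have : (volume : Measure ((Fin d → ℝ) × (Fin d → ℝ))).IsAddHaarMeasure :=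
    Measure.prod.instIsAddHaarMeasure volume volume
  rw [Measure.integral_comp_smul_of_nonneg volume (fun z => F (θ + z)) t (hR := ht.le),
    integral_add_left_eq_self F θ]
  simp only [Module.finrank_prod, Module.finrank_fintype_fun_eq_card, Fintype.card_fin]
  rw [Complex.real_smul, ← mul_assoc, ← Complex.ofReal_mul, ← pow_add, mul_inv_cancel₀
    (by positivity), Complex.ofReal_one, one_mul]

include hmc hmB hw₁ hw₂ in
/-- The output for damped trigonometric polynomials is a trigonometric polynomial whose coefficients
are modulated by local averages of the symbol. -/
lemma rBm_bump {κ₁ κ₂ : Type} (s₁ : Finset κ₁) (c₁ : κ₁ → ℂ) (ν₁ : κ₁ → Fin d → ℤ)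
    (s₂ : Finset κ₂) (c₂ : κ₂ → ℂ) (ν₂ : κ₂ → Fin d → ℤ) (ε : Fin d → ℝ) {t : ℝ} (ht : 0 < t)
    (y : Fin d → ℝ) :
    rBm m (bump s₁ c₁ ν₁ ε w₁ t) (bump s₂ c₂ ν₂ ε w₂ t) (t⁻¹ • y) =
      ∑ j ∈ s₁, ∑ k ∈ s₂, c₁ j * c₂ k * rch (fr ε (ν₁ j) + fr ε (ν₂ k)) (t⁻¹ • y) *
        locAvg m w₁ w₂ (fr ε (ν₁ j)) (fr ε (ν₂ k)) t y := by
  have hI : ∀ F G : (Fin d → ℝ) → ℂ, Integrable F → Integrable G →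
      Integrable (fun z : (Fin d → ℝ) × (Fin d → ℝ) =>
        F z.1 * G z.2 * m z.1 z.2 * rch (z.1 + z.2) (t⁻¹ • y)) (volume.prod volume) := by
    intro F G hF hG
    refine ((hF.mul_prod hG).mul_bdd (c := Cm) hmc.aestronglyMeasurable
      (ae_of_all _ fun z => hmB _ _)).mul_bdd (c := 1)
      (Continuous.aestronglyMeasurable (by fun_prop)) (ae_of_all _ fun z => (norm_rch _ _).le)
  unfold rBm
  rw [← integral_prod _ (hI _ _ (rSL1_bump s₁ c₁ ν₁ ε hw₁ ht).2 (rSL1_bump s₂ c₂ ν₂ ε hw₂ ht).2)]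
  have e : ∀ z : (Fin d → ℝ) × (Fin d → ℝ), rft (bump s₁ c₁ ν₁ ε w₁ t) z.1 *
      rft (bump s₂ c₂ ν₂ ε w₂ t) z.2 * m z.1 z.2 * rch (z.1 + z.2) (t⁻¹ • y) =
      ∑ j ∈ s₁, ∑ k ∈ s₂, c₁ j * (gauHat (w₁ * t ^ 2) (z.1 - fr ε (ν₁ j)) : ℂ) *
        (c₂ k * (gauHat (w₂ * t ^ 2) (z.2 - fr ε (ν₂ k)) : ℂ)) * m z.1 z.2 *
        rch (z.1 + z.2) (t⁻¹ • y) := fun z => by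
    rw [rft_bump s₁ c₁ ν₁ ε hw₁ ht, rft_bump s₂ c₂ ν₂ ε hw₂ ht, Finset.sum_mul_sum]
    simp only [Finset.sum_mul]
  simp only [e]
  have hg : ∀ {w : ℝ} (hw : 0 < w) (C : ℂ) (θ : Fin d → ℝ),
      Integrable fun ξ : Fin d → ℝ => C * (gauHat (w * t ^ 2) (ξ - θ) : ℂ) := fun hw C θ =>
    ((integrable_gauHat (by positivity)).comp_sub_right _).ofReal.const_mul _
  rw [integral_finsetSum _ fun j _ => integrable_finsetSum _ fun k _ =>
    hI _ _ (hg hw₁ _ _) (hg hw₂ _ _)]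
  refine Finset.sum_congr rfl fun j _ => ?_
  rw [integral_finsetSum _ fun k _ => hI _ _ (hg hw₁ _ _) (hg hw₂ _ _)]
  refine Finset.sum_congr rfl fun k _ => ?_
  rw [← Measure.volume_eq_prod, integral_affine _ (fr ε (ν₁ j), fr ε (ν₂ k)) ht, locAvg,
    ← integral_const_mul, ← integral_const_mul]
  refine integral_congr_ae (ae_of_all _ fun z => ?_)
  simp only [Prod.fst_add, Prod.snd_add, Prod.smul_fst, Prod.smul_snd, add_sub_cancel_left,
    gauHat_scale hw₁ ht, gauHat_scale hw₂ ht, Fintype.card_fin]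
  have hr : rch (fr ε (ν₁ j) + t • z.1 + (fr ε (ν₂ k) + t • z.2)) (t⁻¹ • y) =
      rch (fr ε (ν₁ j) + fr ε (ν₂ k)) (t⁻¹ • y) * rch (z.1 + z.2) y := by
    rw [show fr ε (ν₁ j) + t • z.1 + (fr ε (ν₂ k) + t • z.2) =
      (fr ε (ν₁ j) + fr ε (ν₂ k)) + t • (z.1 + z.2) by rw [smul_add]; abel, rch_add,
      rch_smul t, smul_inv_smul₀ ht.ne']
  rw [hr]
  have htc : (t : ℂ) ≠ 0 := by exact_mod_cast ht.ne'
  push_cast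
  field_simp

end symbol

/-! ### Comparison of norms -/

/-- Uniform continuity of `‖·‖^p` on bounded sets: neither `u` nor `v` need converge. -/
lemma tendsto_rpow_sub {l : Filter ℝ} {u v : ℝ → ℂ} {R p : ℝ} (hp : 0 < p)
    (hv : ∀ t, ‖v t‖ ≤ R) (h : Tendsto (fun t => u t - v t) l (𝓝 0)) :
    Tendsto (fun t => ‖u t‖ ^ p - ‖v t‖ ^ p) l (𝓝 0) := by
  have huc : UniformContinuousOn (fun z : ℂ => ‖z‖ ^ p) (Metric.closedBall 0 (R + 1)) :=
    (isCompact_closedBall _ _).uniformContinuousOn_of_continuous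
      (continuous_norm.rpow_const fun _ => Or.inr hp.le).continuousOn
  rw [Metric.uniformContinuousOn_iff] at huc
  rw [Metric.tendsto_nhds] at h ⊢
  intro δ hδ
  obtain ⟨η, hη, H⟩ := huc δ hδ
  filter_upwards [h η hη, h 1 one_pos] with t h1 h2
  rw [dist_zero_right] at h1 h2 ⊢
  have hu : ‖u t‖ ≤ R + 1 := by
    have := norm_le_norm_add_norm_sub (v t) (u t)
    have hvt := hv t
    rw [norm_sub_rev] at this
    linarith
  have := H (u t) (by simpa using hu) (v t) (by simpa using (hv t).trans (by linarith))
    (by rwa [dist_eq_norm])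
  rwa [Real.dist_eq] at this

lemma eLpNorm_scale {d : ℕ} (h : (Fin d → ℝ) → ℂ) {q t : ℝ} (hq : 0 < q) (ht : 0 < t) :
    eLpNorm (fun y => h (t⁻¹ • y)) (ENNReal.ofReal q) volume =
      ENNReal.ofReal (t ^ d) ^ (1 / q) * eLpNorm h (ENNReal.ofReal q) volume := by
  have he : MeasurableEmbedding fun y : Fin d → ℝ => t⁻¹ • y :=
    measurableEmbedding_const_smul₀ (inv_ne_zero ht.ne')
  change eLpNorm (h ∘ fun y : Fin d → ℝ => t⁻¹ • y) _ _ = _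
  rw [← he.eLpNorm_map_measure, Measure.map_addHaar_smul _ (inv_ne_zero ht.ne'),
    eLpNorm_smul_measure_of_ne_top ENNReal.ofReal_ne_top, smul_eq_mul]
  congr 2
  · rw [Module.finrank_fintype_fun_eq_card, Fintype.card_fin, inv_pow, inv_inv,
      abs_of_pos (by positivity)]
  · rw [one_div, ENNReal.toReal_inv, ENNReal.toReal_ofReal hq.le, one_div]

lemma eLpNorm_eq_ofReal {d : ℕ} {μ : Measure (Fin d → ℝ)} {h : (Fin d → ℝ) → ℂ} {q : ℝ}
    (hq : 0 < q) (hi : Integrable (fun x => ‖h x‖ ^ q) μ) :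
    eLpNorm h (ENNReal.ofReal q) μ = ENNReal.ofReal (∫ x, ‖h x‖ ^ q ∂μ) ^ (1 / q) := by
  rw [eLpNorm_eq_lintegral_rpow_enorm_toReal (by simpa using hq) ENNReal.ofReal_ne_top,
    ENNReal.toReal_ofReal hq.le,
    ofReal_integral_eq_lintegral_ofReal hi (ae_of_all _ fun x => by positivity)]
  congr 1
  refine lintegral_congr fun x => ?_
  rw [← ENNReal.ofReal_rpow_of_nonneg (norm_nonneg _) hq.le, ofReal_norm]

lemma eLpNorm_trig {d : ℕ} {κ : Type} (s : Finset κ) (c : κ → ℂ) (ν : κ → Fin d → ℤ)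
    {q : ℝ} (hq : 0 < q) :
    eLpNorm (trig s c ν 1) (ENNReal.ofReal q) (torusMeasure d) =
      ENNReal.ofReal (∫ x, ‖trig s c ν 1 x‖ ^ q ∂torusMeasure d) ^ (1 / q) := by
  refine eLpNorm_eq_ofReal hq (Integrable.of_bound (C := (∑ k ∈ s, ‖c k‖) ^ q)
    (Continuous.aestronglyMeasurable (Continuous.rpow_const (by fun_prop) fun _ => Or.inr hq.le))
    (ae_of_all _ fun x => ?_))
  rw [Real.norm_of_nonneg (by positivity)]
  exact Real.rpow_le_rpow (norm_nonneg _) (norm_trig_le _ _ _ _ _) hq.le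

lemma norm_trig_mul_gau_rpow {d : ℕ} {κ : Type} (s : Finset κ) (c : κ → ℂ) (ν : κ → Fin d → ℤ)
    (ε x y : Fin d → ℝ) {q : ℝ} (hq : 0 < q) :
    ‖trig s c ν ε x * gau (1 / q) y‖ ^ q = ‖trig s c ν ε x‖ ^ q * gau 1 y := by
  have := gau_pos (1 / q) y
  rw [norm_mul, Complex.norm_real, Real.norm_of_nonneg this.le,
    Real.mul_rpow (norm_nonneg _) this.le, gau_rpow, one_div_mul_cancel hq.ne']

lemma integrable_trig_rpow_gau {d : ℕ} {κ : Type} (s : Finset κ) (c : κ → ℂ) (ν : κ → Fin d → ℤ)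
    (ε : Fin d → ℝ) (r : ℝ) {q : ℝ} (hq : 0 < q) :
    Integrable fun y : Fin d → ℝ => ‖trig s c ν ε (r • y)‖ ^ q * gau 1 y := by
  refine (integrable_gau one_pos).bdd_mul (c := (∑ k ∈ s, ‖c k‖) ^ q)
    (Continuous.aestronglyMeasurable (Continuous.rpow_const (by fun_prop) fun _ => Or.inr hq.le))
    (ae_of_all _ fun x => ?_)
  rw [Real.norm_of_nonneg (by positivity)]
  exact Real.rpow_le_rpow (norm_nonneg _) (norm_trig_le _ _ _ _ _) hq.le

/-- The weight `1/q` is chosen so that the `q`-th power of the Gaussian factor is `gau 1`, whatever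
`q` is. -/
lemma tendsto_eLpNorm_bump {d : ℕ} {κ : Type} (s : Finset κ) (c : κ → ℂ) (ν : κ → Fin d → ℤ)
    {ε : Fin d → ℝ} (hε : ∀ i, 0 < ε i) {q : ℝ} (hq : 0 < q) :
    Tendsto (fun t : ℝ => eLpNorm (fun y => bump s c ν ε (1 / q) t (t⁻¹ • y)) (ENNReal.ofReal q)
      volume) (𝓝[>] 0) (𝓝 (eLpNorm (trig s c ν 1) (ENNReal.ofReal q) (torusMeasure d))) := by
  rw [eLpNorm_trig s c ν hq]
  refine Tendsto.congr' ?_ ((ENNReal.continuous_rpow_const.tendsto _).comp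
    (ENNReal.tendsto_ofReal (tendsto_average_trig s c ν hε hq)))
  filter_upwards [self_mem_nhdsWithin] with t ht
  have ht : 0 < t := ht
  have e : ∀ y, ‖bump s c ν ε (1 / q) t (t⁻¹ • y)‖ ^ q =
      ‖trig s c ν ε (t⁻¹ • y)‖ ^ q * gau 1 y := fun y => by
    unfold bump
    rw [gau_smul, show 1 / q * t ^ 2 * t⁻¹ ^ 2 = 1 / q by field_simp, norm_trig_mul_gau_rpow _ _ _ _ _ _ hq]
  rw [eLpNorm_eq_ofReal hq (by simpa only [e] using integrable_trig_rpow_gau s c ν ε t⁻¹ hq)]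
  simp only [e, Function.comp_apply]

/-- Transference: a bound for `m` on `ℝ^d` holds for the sampled symbol `m(εn, εk)` on `𝕋^d`, with
the same constant and for every `0 < p < ∞`. -/
lemma transference {d : ℕ} {p p₁ p₂ : ℝ} (h1 : 0 < p₁) (h2 : 0 < p₂) (hp : 0 < p)
    (hrel : 1 / p₁ + 1 / p₂ = 1 / p) {m : (Fin d → ℝ) → (Fin d → ℝ) → ℂ}
    (hmc : Continuous fun z : ((Fin d → ℝ) × (Fin d → ℝ)) => m z.1 z.2)
    {Cm : ℝ} (hmB : ∀ ξ η, ‖m ξ η‖ ≤ Cm) {C : ℝ≥0∞} (hC : C ≠ ⊤)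
    (hbd : ∀ f g : (Fin d → ℝ) → ℂ, rSL1 f → rSL1 g →
      eLpNorm (rBm m f g) (ENNReal.ofReal p) volume ≤
        C * eLpNorm f (ENNReal.ofReal p₁) volume * eLpNorm g (ENNReal.ofReal p₂) volume)
    {ε : Fin d → ℝ} (hε : ∀ i, 0 < ε i) {κ₁ κ₂ : Type} (s₁ : Finset κ₁) (c₁ : κ₁ → ℂ)
    (ν₁ : κ₁ → Fin d → ℤ) (s₂ : Finset κ₂) (c₂ : κ₂ → ℂ) (ν₂ : κ₂ → Fin d → ℤ) :
    eLpNorm (trig (s₁ ×ˢ s₂) (fun j => c₁ j.1 * c₂ j.2 * m (fr ε (ν₁ j.1)) (fr ε (ν₂ j.2)))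
        (fun j => ν₁ j.1 + ν₂ j.2) 1) (ENNReal.ofReal p) (torusMeasure d) ≤
      C * eLpNorm (trig s₁ c₁ ν₁ 1) (ENNReal.ofReal p₁) (torusMeasure d) *
        eLpNorm (trig s₂ c₂ ν₂ 1) (ENNReal.ofReal p₂) (torusMeasure d) := by
  have hw₁ : 0 < 1 / p₁ := by positivity
  have hw₂ : 0 < 1 / p₂ := by positivity
  set c : κ₁ × κ₂ → ℂ := fun j => c₁ j.1 * c₂ j.2 * m (fr ε (ν₁ j.1)) (fr ε (ν₂ j.2)) with hc
  set ν : κ₁ × κ₂ → Fin d → ℤ := fun j => ν₁ j.1 + ν₂ j.2 with hν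
  set s := s₁ ×ˢ s₂ with hs
  -- The rescaled output on `ℝ^d` and its pointwise approximation.
  set B : ℝ → (Fin d → ℝ) → ℂ := fun t y =>
    rBm m (bump s₁ c₁ ν₁ ε (1 / p₁) t) (bump s₂ c₂ ν₂ ε (1 / p₂) t) (t⁻¹ • y) with hB
  set D : ℝ → (Fin d → ℝ) → ℂ := fun t y => trig s c ν ε (t⁻¹ • y) * gau (1 / p) y with hD
  set R := ∑ k ∈ s, ‖c k‖ with hR
  have hR0 : 0 ≤ R := Finset.sum_nonneg fun k _ => norm_nonneg _
  have hDp : ∀ t y, ‖D t y‖ ^ p = ‖trig s c ν ε (t⁻¹ • y)‖ ^ p * gau 1 y := fun t y =>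
    norm_trig_mul_gau_rpow _ _ _ _ _ _ hp
  have hDM : ∀ t y, ‖D t y‖ ^ p ≤ R ^ p * gau 1 y := fun t y => by
    rw [hDp]
    exact mul_le_mul_of_nonneg_right
      (Real.rpow_le_rpow (norm_nonneg _) (norm_trig_le _ _ _ _ _) hp.le) (gau_pos _ _).le
  have hDR : ∀ t y, ‖D t y‖ ≤ R := fun t y => by
    simp only [hD, norm_mul, Complex.norm_real, Real.norm_of_nonneg (gau_pos (1 / p) y).le]
    exact (mul_le_of_le_one_right (norm_nonneg _) (gau_le_one (by positivity) _)).trans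
      (norm_trig_le _ _ _ _ _)
  have hfr : ∀ a b : Fin d → ℤ, fr ε a + fr ε b = fun i => ε i * (((a + b) i : ℤ) : ℝ) :=
    fun a b => by ext i; simp [fr]; ring
  have hBm : ∀ t, 0 < t → StronglyMeasurable (B t) := fun t ht => by
    simp only [hB, funext (rBm_bump hmc hmB hw₁ hw₂ s₁ c₁ ν₁ s₂ c₂ ν₂ ε ht)]
    refine Finset.stronglyMeasurable_fun_sum _ fun j _ =>
      Finset.stronglyMeasurable_fun_sum _ fun k _ => ?_
    exact (Continuous.stronglyMeasurable (by fun_prop)).mul (measurable_locAvg hmc _ _ _)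
  have hBD : ∀ y, Tendsto (fun t => B t y - D t y) (𝓝[>] 0) (𝓝 0) := fun y => by
    have h : Tendsto (fun t : ℝ => ∑ j ∈ s₁, ∑ k ∈ s₂, c₁ j * c₂ k *
        rch (fr ε (ν₁ j) + fr ε (ν₂ k)) (t⁻¹ • y) *
        (locAvg m (1 / p₁) (1 / p₂) (fr ε (ν₁ j)) (fr ε (ν₂ k)) t y -
          m (fr ε (ν₁ j)) (fr ε (ν₂ k)) * gau (1 / p) y)) (𝓝[>] 0) (𝓝 0) := by
      rw [show (0 : ℂ) = ∑ j ∈ s₁, ∑ k ∈ s₂, 0 by simp]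
      refine tendsto_finsetSum _ fun j _ => tendsto_finsetSum _ fun k _ => ?_
      have h0 := tendsto_locAvg hmc hmB hw₁ hw₂ (fr ε (ν₁ j)) (fr ε (ν₂ k)) y
      rw [hrel, tendsto_iff_norm_sub_tendsto_zero] at h0
      rw [tendsto_zero_iff_norm_tendsto_zero]
      have h3 := h0.const_mul (‖c₁ j‖ * ‖c₂ k‖)
      rw [mul_zero] at h3
      refine h3.congr fun t => ?_
      simp only [norm_mul, norm_rch, mul_one]
    refine h.congr' ?_
    filter_upwards [self_mem_nhdsWithin] with t ht
    simp only [hB, hD, rBm_bump hmc hmB hw₁ hw₂ s₁ c₁ ν₁ s₂ c₂ ν₂ ε ht, trig, hs,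
      Finset.sum_product, hc, hν, hfr, mul_sub, Finset.sum_sub_distrib, Finset.sum_mul]
    congr 1
    refine Finset.sum_congr rfl fun j _ => Finset.sum_congr rfl fun k _ => by ring
  -- Truncating at `R^p gau 1`, which dominates `‖D‖^p`, supplies the integrable majorant that `B`
  -- itself lacks.
  set J : ℝ → ℝ := fun t => ∫ y, min (‖B t y‖ ^ p) (R ^ p * gau 1 y) with hJ
  have hMi : Integrable fun y : Fin d → ℝ => R ^ p * gau 1 y := (integrable_gau one_pos).const_mul _
  have hM0 : ∀ y : Fin d → ℝ, 0 ≤ R ^ p * gau 1 y := fun y =>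
    mul_nonneg (by positivity) (gau_pos _ _).le
  have hmin_meas : ∀ t, 0 < t → AEStronglyMeasurable
      (fun y => min (‖B t y‖ ^ p) (R ^ p * gau 1 y)) volume := fun t ht =>
    (((hBm t ht).norm.measurable.pow_const p).min
      (Continuous.measurable (by fun_prop))).aestronglyMeasurable
  have hmin_int : ∀ t, 0 < t → Integrable (fun y => min (‖B t y‖ ^ p) (R ^ p * gau 1 y)) :=
    fun t ht => hMi.mono' (hmin_meas t ht) (ae_of_all _ fun y => by
      rw [Real.norm_of_nonneg (le_min (by positivity) (hM0 y))]; exact min_le_right _ _)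
  have hDi : ∀ t, Integrable fun y => ‖D t y‖ ^ p := fun t => by
    simpa only [hDp] using integrable_trig_rpow_gau s c ν ε t⁻¹ hp
  have hdiff : Tendsto (fun t => ∫ y, (min (‖B t y‖ ^ p) (R ^ p * gau 1 y) - ‖D t y‖ ^ p))
      (𝓝[>] 0) (𝓝 0) := by
    suffices h : Tendsto (fun t => ∫ y, (min (‖B t y‖ ^ p) (R ^ p * gau 1 y) - ‖D t y‖ ^ p))
        (𝓝[>] 0) (𝓝 (∫ _ : Fin d → ℝ, (0 : ℝ))) by rwa [integral_zero] at h
    refine tendsto_integral_filter_of_dominated_convergence (fun y => R ^ p * gau 1 y) ?_ ?_ hMi ?_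
    · filter_upwards [self_mem_nhdsWithin] with t ht
      exact (hmin_meas t ht).sub (hDi t).aestronglyMeasurable
    · refine Eventually.of_forall fun t => ae_of_all _ fun y => ?_
      have a1 : 0 ≤ min (‖B t y‖ ^ p) (R ^ p * gau 1 y) := le_min (by positivity) (hM0 y)
      have a2 := min_le_right (‖B t y‖ ^ p) (R ^ p * gau 1 y)
      have a3 : 0 ≤ ‖D t y‖ ^ p := by positivity
      have a4 := hDM t y
      rw [Real.norm_eq_abs, abs_le]
      constructor <;> linarith
    · refine ae_of_all _ fun y => ?_
      refine squeeze_zero_norm (fun t => ?_)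
        (tendsto_zero_iff_norm_tendsto_zero.1 (tendsto_rpow_sub hp (fun t => hDR t y) (hBD y)))
      have := abs_min_sub_min_le_max (‖B t y‖ ^ p) (R ^ p * gau 1 y) (‖D t y‖ ^ p) (R ^ p * gau 1 y)
      rw [min_eq_left (hDM t y), sub_self, abs_zero, max_eq_left (abs_nonneg _)] at this
      exact this
  have hJlim : Tendsto J (𝓝[>] 0) (𝓝 (∫ x, ‖trig s c ν 1 x‖ ^ p ∂torusMeasure d)) := by
    have h := hdiff.add (tendsto_average_trig s c ν hε hp)
    rw [zero_add] at h
    refine h.congr' ?_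
    filter_upwards [self_mem_nhdsWithin] with t ht
    rw [integral_sub (hmin_int t ht) (hDi t)]
    simp only [hDp, hJ]
    ring
  rw [eLpNorm_trig s c ν hp]
  have hl := (ENNReal.continuous_rpow_const (y := 1 / p).tendsto _).comp
    (ENNReal.tendsto_ofReal hJlim)
  have hfin : ∀ {κ : Type} (s : Finset κ) (c : κ → ℂ) (ν : κ → Fin d → ℤ) {q : ℝ}, 0 < q →
      eLpNorm (trig s c ν 1) (ENNReal.ofReal q) (torusMeasure d) ≠ ⊤ := fun s c ν q hq => by
    rw [eLpNorm_trig s c ν hq]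
    exact ENNReal.rpow_ne_top_of_nonneg (by positivity) ENNReal.ofReal_ne_top
  have hr := ENNReal.Tendsto.mul
    (ENNReal.Tendsto.const_mul (a := C) (tendsto_eLpNorm_bump s₁ c₁ ν₁ hε h1) (Or.inr hC))
    (Or.inr (hfin s₂ c₂ ν₂ h2)) (tendsto_eLpNorm_bump s₂ c₂ ν₂ hε h2)
    (Or.inr (ENNReal.mul_ne_top hC (hfin s₁ c₁ ν₁ h1)))
  refine le_of_tendsto_of_tendsto hl hr ?_
  filter_upwards [self_mem_nhdsWithin] with t ht
  have ht : 0 < t := ht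
  have hlow : ENNReal.ofReal (J t) ^ (1 / p) ≤ eLpNorm (B t) (ENNReal.ofReal p) volume := by
    rw [eLpNorm_eq_lintegral_rpow_enorm_toReal (by simpa using hp) ENNReal.ofReal_ne_top,
      ENNReal.toReal_ofReal hp.le]
    refine ENNReal.rpow_le_rpow ?_ (by positivity)
    rw [hJ, ofReal_integral_eq_lintegral_ofReal (hmin_int t ht)
      (ae_of_all _ fun y => le_min (by positivity) (hM0 y))]
    refine lintegral_mono fun y => ?_
    rw [← ofReal_norm, ENNReal.ofReal_rpow_of_nonneg (norm_nonneg _) hp.le]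
    exact ENNReal.ofReal_le_ofReal (min_le_left _ _)
  refine hlow.trans ?_
  simp only [hB]
  rw [eLpNorm_scale _ hp ht, eLpNorm_scale _ h1 ht, eLpNorm_scale _ h2 ht, ← hrel,
    ENNReal.rpow_add _ _ (by simpa using pow_pos ht d) ENNReal.ofReal_ne_top]
  refine (mul_le_mul_right (hbd _ _ (rSL1_bump s₁ c₁ ν₁ ε hw₁ ht) (rSL1_bump s₂ c₂ ν₂ ε hw₂ ht))
    _).trans (le_of_eq ?_)
  ring

theorem stmt12 (d : ℕ) (hd : 1 ≤ d)
    (p p₁ p₂ : ℝ) (h1 : 1 ≤ p₁) (h2 : 1 ≤ p₂) (hp : 0 < p)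
    (hrel : 1/p₁ + 1/p₂ = 1/p)
    (m : (Fin d → ℝ) → (Fin d → ℝ) → ℂ)
    (hmc : Continuous fun z : ((Fin d → ℝ) × (Fin d → ℝ)) => m z.1 z.2)
    (Cm : ℝ) (hmB : ∀ ξ η, ‖m ξ η‖ ≤ Cm)
    (hm : rBMnorm (Fin d) p₁ p₂ p m ≠ ⊤) :
    ⨆ ε : {ε : Fin d → ℝ // ∀ i, 0 < ε i},
        tBMnorm d p₁ p₂ p
          (fun n k => m (fun i => (ε : Fin d → ℝ) i * ((n i : ℤ) : ℝ))
            (fun i => (ε : Fin d → ℝ) i * ((k i : ℤ) : ℝ))) ≤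
      ENNReal.ofReal (cc p p₁ p₂) * rBMnorm (Fin d) p₁ p₂ p m := by
  have hp₁ : 0 < p₁ := by linarith
  have hp₂ : 0 < p₂ := by linarith
  have key : ∀ ε : {ε : Fin d → ℝ // ∀ i, 0 < ε i}, tBMnorm d p₁ p₂ p
      (fun n k => m (fun i => (ε : Fin d → ℝ) i * ((n i : ℤ) : ℝ))
        (fun i => (ε : Fin d → ℝ) i * ((k i : ℤ) : ℝ))) ≤ rBMnorm (Fin d) p₁ p₂ p m := by
    intro ε
    refine le_sInf fun C hC => ?_
    by_cases hCt : C = ⊤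
    · rw [hCt]; exact le_top
    · refine sInf_le fun a b => ?_
      have h := transference hp₁ hp₂ hp hrel hmc hmB hCt hC ε.2 a.support a id b.support b id
      have e : ∀ n : Fin d → ℤ, (fun i => (1 : Fin d → ℝ) i * ((n i : ℤ) : ℝ)) =
          fun i => ((n i : ℤ) : ℝ) := fun n => by ext i; simp
      unfold trig at h
      simp only [Finset.sum_product, id, e, Pi.add_apply] at h
      exact h
  refine (iSup_le key).trans ?_
  calc rBMnorm (Fin d) p₁ p₂ p m = 1 * rBMnorm (Fin d) p₁ p₂ p m := (one_mul _).symm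
    _ ≤ ENNReal.ofReal (cc p p₁ p₂) * rBMnorm (Fin d) p₁ p₂ p m :=
      mul_le_mul_left (ENNReal.one_le_ofReal.2 (one_le_cc h1 h2 hp)) _
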